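/- arXiv:0907.0887 — 2 statements merged into one kernel-verified Lean document; each statement's English description precedes it below -/
import Mathlib

section
/- There is a constant C > 0, depending only on d and Γ, such that: for every m ≤ d−1 and n ≤ d−1, every pair of lattice r-subspaces V ∈ 𝒱(r,m) and W ∈ 𝒱(r,n), and every ξ ∈ ℝ^d, one has |ξ_{V+W}| ≤ C r^{nd} (|ξ_V| + |ξ_W|). -/
noncomputable section

open Set Submodule Module MeasureTheory Relation
open scoped RealInnerProductSpace

variable {d : ℕ}

/-- The lattice Γ generated over ℤ by the basis `B` of ℝ^d. -/
def latticeOf (B : Basis (Fin d) ℝ (EuclideanSpace ℝ (Fin d))) :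
    Submodule ℤ (EuclideanSpace ℝ (Fin d)) :=
  Submodule.span ℤ (Set.range B)

/-- The determinant d(Γ) of the lattice generated by `B`. -/
def latDet (B : Basis (Fin d) ℝ (EuclideanSpace ℝ (Fin d))) : ℝ :=
  |(EuclideanSpace.basisFun (Fin d) ℝ).toBasis.det (fun i => B i)|

/-- The dual lattice Γ† = {θ : θ·g ∈ 2πℤ for all g ∈ Γ}. -/
def dualLattice (B : Basis (Fin d) ℝ (EuclideanSpace ℝ (Fin d))) :
    Set (EuclideanSpace ℝ (Fin d)) :=
  {θ | ∀ g ∈ latticeOf B, ∃ k : ℤ, ⟪θ, g⟫ = 2 * Real.pi * k}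

/-- Θ_r : nonzero dual lattice vectors of norm at most r. -/
def Theta (B : Basis (Fin d) ℝ (EuclideanSpace ℝ (Fin d))) (r : ℝ) :
    Set (EuclideanSpace ℝ (Fin d)) :=
  {θ | θ ∈ dualLattice B ∧ θ ≠ 0 ∧ ‖θ‖ ≤ r}

/-- Θ_r⁰ : dual lattice vectors of norm at most r (including 0). -/
def Theta0 (B : Basis (Fin d) ℝ (EuclideanSpace ℝ (Fin d))) (r : ℝ) :
    Set (EuclideanSpace ℝ (Fin d)) :=
  {θ | θ ∈ dualLattice B ∧ ‖θ‖ ≤ r}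

/-- A lattice r-subspace: a subspace spanned by dual lattice vectors from Θ_r⁰. -/
def IsLatticeSubspace (B : Basis (Fin d) ℝ (EuclideanSpace ℝ (Fin d))) (r : ℝ)
    (V : Submodule ℝ (EuclideanSpace ℝ (Fin d))) : Prop :=
  ∃ S : Set (EuclideanSpace ℝ (Fin d)), S ⊆ Theta0 B r ∧ V = Submodule.span ℝ S

/-- Orthogonal projection ξ_V onto a subspace, viewed in the ambient space. -/
def projV (V : Submodule ℝ (EuclideanSpace ℝ (Fin d))) (ξ : EuclideanSpace ℝ (Fin d)) :
    EuclideanSpace ℝ (Fin d) :=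
  (orthogonalProjection V ξ : EuclideanSpace ℝ (Fin d))

/-- ω_n: the volume of the unit ball in ℝ^n. -/
def unitBallVol (n : ℕ) : ℝ :=
  (MeasureTheory.volume (Metric.ball (0 : EuclideanSpace ℝ (Fin n)) 1)).toReal

/-- The resonant layer Λ(θ) (= ℝ^d when θ = 0). -/
def layer (ρ a : ℝ) (θ : EuclideanSpace ℝ (Fin d)) : Set (EuclideanSpace ℝ (Fin d)) :=
  {ξ | θ = 0 ∨ |⟪ξ, θ⟫| < ρ ^ a * ‖θ‖}

/-- Υ_θ(ξ): the points θ-resonant congruent to ξ. -/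
def upsTheta (ρ a : ℝ) (θ ξ : EuclideanSpace ℝ (Fin d)) : Set (EuclideanSpace ℝ (Fin d)) :=
  {η | ξ ∈ layer ρ a θ ∧ η ∈ layer ρ a θ ∧ ∃ l : ℤ, ξ - η = (l : ℝ) • θ}

/-- One step of resonant congruence (with some θ ∈ Θ_r⁰). -/
def resStep (B : Basis (Fin d) ℝ (EuclideanSpace ℝ (Fin d))) (ρ a r : ℝ)
    (ξ η : EuclideanSpace ℝ (Fin d)) : Prop :=
  ∃ θ ∈ Theta0 B r, η ∈ upsTheta ρ a θ ξ

/-- Υ(ξ): all points resonant congruent to ξ. -/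
def Ups (B : Basis (Fin d) ℝ (EuclideanSpace ℝ (Fin d))) (ρ a r : ℝ)
    (ξ : EuclideanSpace ℝ (Fin d)) : Set (EuclideanSpace ℝ (Fin d)) :=
  {η | Relation.ReflTransGen (resStep B ρ a r) ξ η}

/-- N(ξ) = Υ(ξ) − ξ. -/
def resN (B : Basis (Fin d) ℝ (EuclideanSpace ℝ (Fin d))) (ρ a r : ℝ)
    (ξ : EuclideanSpace ℝ (Fin d)) : Set (EuclideanSpace ℝ (Fin d)) :=
  {m | ξ + m ∈ Ups B ρ a r ξ}

/-- Ξ₁(V) = {ξ : |ξ_V| < ρ^{α_n}}, n = dim V. -/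
def Xi1 (ρ : ℝ) (α : ℕ → ℝ) (V : Submodule ℝ (EuclideanSpace ℝ (Fin d))) :
    Set (EuclideanSpace ℝ (Fin d)) :=
  {ξ | ‖projV V ξ‖ < ρ ^ α (Module.finrank ℝ V)}

/-- Ξ₂(V) = ∪_{ξ ∈ Ξ₁(V)} Υ(ξ). -/
def Xi2 (B : Basis (Fin d) ℝ (EuclideanSpace ℝ (Fin d))) (ρ r : ℝ) (α : ℕ → ℝ)
    (V : Submodule ℝ (EuclideanSpace ℝ (Fin d))) : Set (EuclideanSpace ℝ (Fin d)) :=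
  {η | ∃ ξ ∈ Xi1 ρ α V, η ∈ Ups B ρ (α 1) r ξ}

/-- Ξ(V): Ξ₂(V) minus the Ξ₂(W) for all lattice r-subspaces W of larger dimension. -/
def Xi (B : Basis (Fin d) ℝ (EuclideanSpace ℝ (Fin d))) (ρ r : ℝ) (α : ℕ → ℝ)
    (V : Submodule ℝ (EuclideanSpace ℝ (Fin d))) : Set (EuclideanSpace ℝ (Fin d)) :=
  Xi2 B ρ r α V \
    ⋃ W ∈ {W : Submodule ℝ (EuclideanSpace ℝ (Fin d)) |
        IsLatticeSubspace B r W ∧ Module.finrank ℝ V < Module.finrank ℝ W},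
      Xi2 B ρ r α W

/-- The standing conditions on the parameters ρ ≥ 1, r, κ > 0 and the exponents α_j:
0 = α₀, α_{n+1} > α_n + 2κd², α_d < 1, r ≤ ρ^κ, and r ≥ r₀ (i.e. Θ_r⁰ spans ℝ^d). -/
def GoodParams (B : Basis (Fin d) ℝ (EuclideanSpace ℝ (Fin d))) (ρ r κ : ℝ)
    (α : ℕ → ℝ) : Prop :=
  1 ≤ ρ ∧ 0 < κ ∧ α 0 = 0 ∧ (∀ n < d, α n + 2 * κ * (d : ℝ) ^ 2 < α (n + 1)) ∧
    α d < 1 ∧ r ≤ ρ ^ κ ∧ Submodule.span ℝ (Theta0 B r) = ⊤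

/-- The alternating form `v ↦ det (⟪v i, B j⟫)`. -/
def pairingDet (B : Basis (Fin d) ℝ (EuclideanSpace ℝ (Fin d))) :
    EuclideanSpace ℝ (Fin d) [⋀^Fin d]→ₗ[ℝ] ℝ :=
  Matrix.detRowAlternating.compLinearMap (LinearMap.pi fun j => innerₗ _ (B j))

lemma pairingDet_apply (B : Basis (Fin d) ℝ (EuclideanSpace ℝ (Fin d)))
    (v : Fin d → EuclideanSpace ℝ (Fin d)) :
    pairingDet B v = Matrix.det (Matrix.of fun i j => ⟪B j, v i⟫) := rfl

lemma exists_pairingDet_bound (B : Basis (Fin d) ℝ (EuclideanSpace ℝ (Fin d))) :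
    ∃ M : ℝ, 0 < M ∧ ∀ v, |pairingDet B v| ≤ M * ∏ i, ‖v i‖ := by
  refine (pairingDet B).exists_bound_of_continuous ?_
  simp only [funext (pairingDet_apply B)]
  refine Continuous.matrix_det (continuous_matrix fun i j => ?_)
  simp only [Matrix.of_apply]
  fun_prop

lemma pairingDet_ne_zero (B : Basis (Fin d) ℝ (EuclideanSpace ℝ (Fin d)))
    {v : Fin d → EuclideanSpace ℝ (Fin d)} (hv : LinearIndependent ℝ v) :
    pairingDet B v ≠ 0 := by
  have hinj : LinearMap.ker
      (LinearMap.pi fun j => innerₗ (EuclideanSpace ℝ (Fin d)) (B j)) = ⊥ := by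
    refine LinearMap.ker_eq_bot'.2 fun x hx => InnerProductSpace.ext_inner_left_basis B fun j => ?_
    simpa using congrFun hx j
  have hrows := hv.map' _ hinj
  have hunit : IsUnit (Matrix.of fun i j => ⟪B j, v i⟫) :=
    Matrix.linearIndependent_rows_iff_isUnit.1 hrows
  rw [pairingDet_apply]
  exact ((Matrix.isUnit_iff_isUnit_det _).1 hunit).ne_zero

/-- On dual lattice vectors, `pairingDet` takes values in `(2π)^d ℤ`. -/
lemma one_le_abs_pairingDet (B : Basis (Fin d) ℝ (EuclideanSpace ℝ (Fin d)))
    {v : Fin d → EuclideanSpace ℝ (Fin d)} (hv : LinearIndependent ℝ v)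
    (hdual : ∀ i, v i ∈ dualLattice B) : 1 ≤ |pairingDet B v| := by
  have hex (i j : Fin d) : ∃ k : ℤ, ⟪v i, B j⟫ = 2 * Real.pi * k :=
    hdual i _ (Submodule.subset_span ⟨j, rfl⟩)
  choose k hk using hex
  have hne := pairingDet_ne_zero B hv
  have hdet : pairingDet B v = (2 * Real.pi) ^ d * ((Matrix.of k).det : ℤ) := by
    have hmat : (Matrix.of fun i j => ⟪B j, v i⟫) =
        (2 * Real.pi) • (Matrix.of k).map (Int.castRingHom ℝ) := by
      ext i j
      simp [real_inner_comm, hk]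
    rw [pairingDet_apply, hmat, Matrix.det_smul, Fintype.card_fin, Int.cast_det]
    rfl
  rw [hdet] at hne ⊢
  have hint : (1 : ℝ) ≤ |(((Matrix.of k).det : ℤ) : ℝ)| := by
    exact_mod_cast Int.one_le_abs (Int.cast_ne_zero.1 (right_ne_zero_of_mul hne))
  have hpi : (1 : ℝ) ≤ (2 * Real.pi) ^ d := one_le_pow₀ (by linarith [Real.pi_gt_three])
  rw [abs_mul, abs_of_nonneg (by positivity)]
  exact one_le_mul_of_one_le_of_one_le hpi hint

/-- A vector of a spanning set lying outside the span of a subset can be completed, together with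
a basis of that span, to a basis of the whole space. -/
lemma exists_linearIndependent_completion {E : Type*} [AddCommGroup E] [Module ℝ E]
    [FiniteDimensional ℝ E] {n : ℕ} (hn : finrank ℝ E = n) {S T : Set E} (hST : S ⊆ T)
    (hT : span ℝ T = ⊤) {x : E} (hxT : x ∈ T) (hxS : x ∉ span ℝ S) :
    ∃ (f : Fin n → E) (i : Fin n), LinearIndependent ℝ f ∧ (∀ j, f j ∈ T) ∧ f i = x ∧
      span ℝ S ≤ span ℝ (f '' {i}ᶜ) := by
  obtain ⟨s, hsS, hs, hsli⟩ := exists_linearIndependent ℝ S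
  have hxs : x ∉ span ℝ s := by rwa [hs]
  have hli : LinearIndepOn ℝ id (insert x s) := LinearIndepOn.id_insert hsli hxs
  have hsub : insert x s ⊆ T := insert_subset hxT (hsS.trans hST)
  set b := hli.extend hsub with hb
  have hbli : LinearIndepOn ℝ id b := hli.linearIndepOn_extend hsub
  have hbspan : span ℝ b = ⊤ := by rw [hb, hli.span_extend_eq_span hsub, hT]
  have hbsub : insert x s ⊆ b := hli.subset_extend hsub
  have : Fintype b := hbli.linearIndependent.setFinite.fintype
  have hcard : Fintype.card b = n := by
    rw [← Set.toFinset_card, ← finrank_span_set_eq_card hbli, hbspan, finrank_top, hn]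
  let e : Fin n ≃ b := (Fintype.equivFinOfCardEq hcard).symm
  refine ⟨fun j => e j, e.symm ⟨x, hbsub (mem_insert _ _)⟩,
    hbli.linearIndependent.comp e e.injective, fun j => hli.extend_subset hsub (e j).2, by simp, ?_⟩
  rw [← hs]
  refine span_mono fun y hy => ⟨e.symm ⟨y, hbsub (mem_insert_of_mem _ hy)⟩, ?_, by simp⟩
  simp only [mem_compl_iff, mem_singleton_iff, EmbeddingLike.apply_eq_iff_eq, Subtype.mk.injEq]
  rintro rfl
  exact hxs (subset_span hy)

/-- Replacing an entry by its difference with a combination of the others preserves an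
alternating form. -/
lemma AlternatingMap.map_update_sub_of_mem_span {R E F ι : Type*} [CommRing R] [AddCommGroup E]
    [Module R E] [AddCommGroup F] [Module R F] [DecidableEq ι] (D : E [⋀^ι]→ₗ[R] F) (f : ι → E)
    (i : ι) {v : E} (hv : v ∈ span R (f '' {i}ᶜ)) : D (Function.update f i (f i - v)) = D f := by
  have hle : span R (f '' {i}ᶜ) ≤ LinearMap.ker (D.toMultilinearMap.toLinearMap f i) := by
    rw [span_le]
    rintro _ ⟨j, hj, rfl⟩
    exact D.map_update_self f (Ne.symm hj)
  have hzero : D (Function.update f i v) = 0 := hle hv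
  rw [D.map_update_sub, hzero, sub_zero, Function.update_eq_self]

/-- Quantitative separation of a dual lattice vector from a lattice subspace. -/
lemma one_le_mul_norm_sub (B : Basis (Fin d) ℝ (EuclideanSpace ℝ (Fin d))) {M r : ℝ} (hM : 0 < M)
    (hbound : ∀ v, |pairingDet B v| ≤ M * ∏ i, ‖v i‖) (hr : span ℝ (Theta0 B r) = ⊤)
    {V : Submodule ℝ (EuclideanSpace ℝ (Fin d))} (hV : IsLatticeSubspace B r V)
    {θ v : EuclideanSpace ℝ (Fin d)} (hθ : θ ∈ Theta0 B r) (hθV : θ ∉ V) (hv : v ∈ V) :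
    1 ≤ M * (‖θ - v‖ * r ^ (d - 1)) := by
  obtain ⟨S, hS, rfl⟩ := hV
  obtain ⟨f, i, hf, hfT, rfl, hspan⟩ :=
    exists_linearIndependent_completion finrank_euclideanSpace_fin hS hr hθ hθV
  have hone := one_le_abs_pairingDet B hf fun j => (hfT j).1
  rw [← (pairingDet B).map_update_sub_of_mem_span f i (hspan hv)] at hone
  refine hone.trans ((hbound _).trans (mul_le_mul_of_nonneg_left ?_ hM.le))
  rw [← Finset.mul_prod_erase _ _ (Finset.mem_univ i), Function.update_self]
  refine mul_le_mul_of_nonneg_left ?_ (norm_nonneg _)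
  calc ∏ j ∈ Finset.univ.erase i, ‖Function.update f i (f i - v) j‖
      ≤ ∏ _j ∈ Finset.univ.erase i, r := by
        refine Finset.prod_le_prod (fun _ _ => norm_nonneg _) fun j hj => ?_
        rw [Function.update_of_ne (Finset.ne_of_mem_erase hj)]
        exact (hfT j).2
    _ = r ^ (d - 1) := by simp

/-- If `ξ` has projections of size at most `a` on `V` and `w` on `ℝθ`, then its projection on
`V + ℝθ` is controlled by the ratio of `‖θ‖` to the distance from `θ` to `V`. -/
lemma abs_inner_le_of_mem_sup_span_singleton {E : Type*} [NormedAddCommGroup E]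
    [InnerProductSpace ℝ E] {V : Submodule ℝ E} [V.HasOrthogonalProjection] {ξ θ x : E}
    {a w K : ℝ} (ha : 0 ≤ a) (hw : 0 ≤ w) (hK0 : 0 ≤ K) (hV : ∀ v ∈ V, |⟪ξ, v⟫| ≤ a * ‖v‖)
    (hθ : |⟪ξ, θ⟫| ≤ w * ‖θ‖) (hK : ‖θ‖ ≤ K * ‖θ - V.starProjection θ‖)
    (hx : x ∈ V ⊔ span ℝ {θ}) : |⟪ξ, x⟫| ≤ (a + K * (a + w)) * ‖x‖ := by
  obtain ⟨v, hv, y, hy, rfl⟩ := mem_sup.1 hx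
  obtain ⟨t, rfl⟩ := mem_span_singleton.1 hy
  set p := V.starProjection θ
  have hp : p ∈ V := V.starProjection_apply_mem θ
  have hq : v + t • p ∈ V := V.add_mem hv (V.smul_mem t hp)
  have hdecomp : v + t • θ = (v + t • p) + t • (θ - p) := by module
  have horth : ⟪v + t • p, t • (θ - p)⟫ = 0 := by
    rw [inner_smul_right, (V.mem_orthogonal _).1 (V.sub_starProjection_mem_orthogonal θ) _ hq,
      mul_zero]
  have hpyth := norm_add_sq_eq_norm_sq_add_norm_sq_of_inner_eq_zero _ _ horth
  rw [← hdecomp] at hpyth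
  have hq_le : ‖v + t • p‖ ≤ ‖v + t • θ‖ :=
    abs_le_of_sq_le_sq' (by nlinarith [sq_nonneg ‖t • (θ - p)‖]) (norm_nonneg _) |>.2
  have hu_le : |t| * ‖θ - p‖ ≤ ‖v + t • θ‖ := by
    rw [← Real.norm_eq_abs, ← norm_smul]
    exact abs_le_of_sq_le_sq' (by nlinarith [sq_nonneg ‖v + t • p‖]) (norm_nonneg _) |>.2
  have hpθ : ‖p‖ ≤ ‖θ‖ := V.norm_starProjection_apply_le θ
  have hu : |⟪ξ, θ - p⟫| ≤ (a + w) * ‖θ‖ := by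
    rw [inner_sub_right]
    have := abs_sub ⟪ξ, θ⟫ ⟪ξ, p⟫
    nlinarith [hV p hp, mul_le_mul_of_nonneg_left hpθ ha]
  calc |⟪ξ, v + t • θ⟫|
      ≤ |⟪ξ, v + t • p⟫| + |t| * |⟪ξ, θ - p⟫| := by
        rw [hdecomp, inner_add_right, inner_smul_right, ← abs_mul]
        exact abs_add_le _ _
    _ ≤ a * ‖v + t • p‖ + |t| * ((a + w) * (K * ‖θ - p‖)) := by
        gcongr
        · exact hV _ hq
        · exact hu.trans (by gcongr)
    _ = a * ‖v + t • p‖ + K * (a + w) * (|t| * ‖θ - p‖) := by ring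
    _ ≤ a * ‖v + t • θ‖ + K * (a + w) * ‖v + t • θ‖ := by gcongr
    _ = (a + K * (a + w)) * ‖v + t • θ‖ := by ring

lemma abs_inner_le_norm_projV (V : Submodule ℝ (EuclideanSpace ℝ (Fin d)))
    (ξ : EuclideanSpace ℝ (Fin d)) {v : EuclideanSpace ℝ (Fin d)} (hv : v ∈ V) :
    |⟪ξ, v⟫| ≤ ‖projV V ξ‖ * ‖v‖ := by
  have h : ⟪projV V ξ, v⟫ = ⟪ξ, v⟫ :=
    inner_orthogonalProjectionOnto_eq_of_mem_right (K := V) ⟨v, hv⟩ ξ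
  rw [← h]
  exact abs_real_inner_le_norm _ _

lemma norm_projV_le {V : Submodule ℝ (EuclideanSpace ℝ (Fin d))} {ξ : EuclideanSpace ℝ (Fin d)}
    {a : ℝ} (ha : 0 ≤ a) (h : ∀ v ∈ V, |⟪ξ, v⟫| ≤ a * ‖v‖) : ‖projV V ξ‖ ≤ a := by
  have hmem : projV V ξ ∈ V := (V.orthogonalProjectionOnto ξ).2
  have hinner : ⟪projV V ξ, projV V ξ⟫ = ⟪ξ, projV V ξ⟫ :=
    inner_orthogonalProjectionOnto_eq_of_mem_right (K := V) ⟨_, hmem⟩ ξ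
  have hle := (le_abs_self _).trans (h _ hmem)
  rw [← hinner, real_inner_self_eq_norm_mul_norm] at hle
  by_contra! hlt
  exact absurd hle (not_le.2 (mul_lt_mul_of_pos_right hlt (ha.trans_lt hlt)))

lemma IsLatticeSubspace.sup_span {B : Basis (Fin d) ℝ (EuclideanSpace ℝ (Fin d))} {r : ℝ}
    {V : Submodule ℝ (EuclideanSpace ℝ (Fin d))} (hV : IsLatticeSubspace B r V)
    {S : Set (EuclideanSpace ℝ (Fin d))} (hS : S ⊆ Theta0 B r) :
    IsLatticeSubspace B r (V ⊔ span ℝ S) := by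
  obtain ⟨T, hT, rfl⟩ := hV
  exact ⟨T ∪ S, union_subset hT hS, (span_union T S).symm⟩

lemma one_le_mul_pow (hd : 0 < d) (B : Basis (Fin d) ℝ (EuclideanSpace ℝ (Fin d))) {M r : ℝ}
    (hM : 0 < M) (hbound : ∀ v, |pairingDet B v| ≤ M * ∏ i, ‖v i‖)
    (hr : span ℝ (Theta0 B r) = ⊤) : 0 ≤ r ∧ 1 ≤ M * r ^ d := by
  obtain ⟨θ, hθ, hθ0⟩ : ∃ θ ∈ Theta0 B r, θ ∉ (⊥ : Submodule ℝ (EuclideanSpace ℝ (Fin d))) := by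
    by_contra! h
    have : Nonempty (Fin d) := ⟨⟨0, hd⟩⟩
    exact bot_ne_top ((eq_bot_iff.2 (span_le.2 h)).symm.trans hr)
  have hr0 : 0 ≤ r := (norm_nonneg θ).trans hθ.2
  have hsep := one_le_mul_norm_sub B hM hbound hr ⟨∅, empty_subset _, span_empty.symm⟩ hθ hθ0
    (zero_mem _)
  rw [sub_zero] at hsep
  refine ⟨hr0, hsep.trans (mul_le_mul_of_nonneg_left ?_ hM.le)⟩
  calc ‖θ‖ * r ^ (d - 1) ≤ r * r ^ (d - 1) := by gcongr; exact hθ.2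
    _ = r ^ d := mul_pow_sub_one hd.ne' r

/-- Adjoining dual lattice vectors to a lattice subspace one at a time. -/
lemma abs_inner_le_of_mem_sup_span_finset (hd : 0 < d)
    (B : Basis (Fin d) ℝ (EuclideanSpace ℝ (Fin d))) {M r : ℝ} (hM : 0 < M)
    (hbound : ∀ v, |pairingDet B v| ≤ M * ∏ i, ‖v i‖) (hr : span ℝ (Theta0 B r) = ⊤)
    {V : Submodule ℝ (EuclideanSpace ℝ (Fin d))} (hV : IsLatticeSubspace B r V)
    {ξ : EuclideanSpace ℝ (Fin d)} {a w : ℝ} (ha : 0 ≤ a) (hw : 0 ≤ w)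
    (hVa : ∀ v ∈ V, |⟪ξ, v⟫| ≤ a * ‖v‖) (s : Finset (EuclideanSpace ℝ (Fin d))) :
    (s : Set (EuclideanSpace ℝ (Fin d))) ⊆ Theta0 B r → (∀ θ ∈ s, |⟪ξ, θ⟫| ≤ w * ‖θ‖) →
      ∀ x ∈ V ⊔ span ℝ (s : Set (EuclideanSpace ℝ (Fin d))),
        |⟪ξ, x⟫| ≤ ((2 * (M * r ^ d)) ^ s.card * (a + w) - w) * ‖x‖ := by
  classical
  obtain ⟨hr0, hK⟩ := one_le_mul_pow hd B hM hbound hr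
  induction s using Finset.induction_on with
  | empty => simpa using hVa
  | insert θ s hθs ih =>
    intro hsub hsw x hx
    rw [Finset.coe_insert, insert_subset_iff] at hsub
    have ih' := ih hsub.2 fun η hη => hsw η (Finset.mem_insert_of_mem hη)
    have hθw := hsw θ (Finset.mem_insert_self _ _)
    set U := V ⊔ span ℝ (s : Set (EuclideanSpace ℝ (Fin d))) with hU
    have hUlat : IsLatticeSubspace B r U := hV.sup_span hsub.2
    have hxU : x ∈ U ⊔ span ℝ {θ} := by
      rwa [hU, sup_assoc, ← span_union, union_singleton, ← Finset.coe_insert]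
    set K := M * r ^ d with hKdef
    set b := (2 * K) ^ s.card * (a + w) with hb
    have hb_ge : a + w ≤ b :=
      le_mul_of_one_le_left (by positivity) (one_le_pow₀ (by linarith))
    have hKb : b ≤ K * b := le_mul_of_one_le_left (by linarith) hK
    rw [Finset.card_insert_of_notMem hθs, pow_succ', mul_assoc, ← hb]
    by_cases hθU : θ ∈ U
    · have hx' : x ∈ U := by
        rwa [sup_eq_left.2 ((span_singleton_le_iff_mem θ U).2 hθU)] at hxU
      exact (ih' x hx').trans (mul_le_mul_of_nonneg_right (by linarith) (norm_nonneg x))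
    · have hsep := one_le_mul_norm_sub B hM hbound hr hUlat hsub.1 hθU
        (U.starProjection_apply_mem θ)
      have hθK : ‖θ‖ ≤ K * ‖θ - U.starProjection θ‖ := by
        calc ‖θ‖ ≤ r := hsub.1.2
          _ ≤ r * (M * (‖θ - U.starProjection θ‖ * r ^ (d - 1))) :=
            le_mul_of_one_le_right hr0 hsep
          _ = K * ‖θ - U.starProjection θ‖ := by
            rw [hKdef, ← mul_pow_sub_one hd.ne' r]; ring
      refine (abs_inner_le_of_mem_sup_span_singleton (by linarith) hw (by linarith) ih' hθw hθK
        hxU).trans (mul_le_mul_of_nonneg_right ?_ (norm_nonneg x))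
      rw [sub_add_cancel]
      linarith

/-- Lemma 4.2(2): there is C = C(d,Γ) > 0 such that for all lattice
r-subspaces V ∈ 𝒱(r,m), W ∈ 𝒱(r,n) with m, n ≤ d−1 and all ξ,
|ξ_{V+W}| ≤ C r^{nd} (|ξ_V| + |ξ_W|). -/
theorem projection_sup_le
    (d : ℕ) (hd : 2 ≤ d) (B : Basis (Fin d) ℝ (EuclideanSpace ℝ (Fin d))) :
    ∃ C : ℝ, 0 < C ∧ ∀ r : ℝ, Submodule.span ℝ (Theta0 B r) = ⊤ →
      ∀ m n : ℕ, m ≤ d - 1 → n ≤ d - 1 →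
      ∀ V W : Submodule ℝ (EuclideanSpace ℝ (Fin d)),
        IsLatticeSubspace B r V → Module.finrank ℝ V = m →
        IsLatticeSubspace B r W → Module.finrank ℝ W = n →
      ∀ ξ : EuclideanSpace ℝ (Fin d),
        ‖projV (V ⊔ W) ξ‖ ≤ C * r ^ (n * d) * (‖projV V ξ‖ + ‖projV W ξ‖) := by
  obtain ⟨M, hM, hbound⟩ := exists_pairingDet_bound B
  have hd0 : 0 < d := by omega
  refine ⟨(2 * (M + 1)) ^ d, by positivity, fun r hr m n _ hn V W hV _ hW hWn ξ => ?_⟩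
  have hr0 := (one_le_mul_pow hd0 B hM hbound hr).1
  obtain ⟨S, hS, rfl⟩ := hW
  obtain ⟨t, htS, htspan, htli⟩ := exists_linearIndependent ℝ S
  have htfin : t.Finite := LinearIndependent.setFinite htli
  lift t to Finset (EuclideanSpace ℝ (Fin d)) using htfin
  have hcard : t.card = n := by
    rw [← hWn, ← htspan, finrank_span_finset_eq_card htli]
  have htW (θ : EuclideanSpace ℝ (Fin d)) (hθ : θ ∈ t) :
      |⟪ξ, θ⟫| ≤ ‖projV (span ℝ S) ξ‖ * ‖θ‖ :=
    abs_inner_le_norm_projV _ ξ (subset_span (htS hθ))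
  have hsup := abs_inner_le_of_mem_sup_span_finset hd0 B hM hbound hr hV (norm_nonneg _)
    (norm_nonneg _) (fun v hv => abs_inner_le_norm_projV V ξ hv) t (htS.trans hS) htW
  rw [htspan, hcard] at hsup
  calc ‖projV (V ⊔ span ℝ S) ξ‖
      ≤ (2 * (M * r ^ d)) ^ n * (‖projV V ξ‖ + ‖projV (span ℝ S) ξ‖) :=
        norm_projV_le (by positivity) fun x hx => (hsup x hx).trans
          (mul_le_mul_of_nonneg_right (sub_le_self _ (norm_nonneg _)) (norm_nonneg x))
    _ = (2 * M) ^ n * r ^ (n * d) * (‖projV V ξ‖ + ‖projV (span ℝ S) ξ‖) := by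
        rw [← mul_assoc, mul_pow, ← pow_mul, mul_comm d n]
    _ ≤ (2 * (M + 1)) ^ d * r ^ (n * d) * (‖projV V ξ‖ + ‖projV (span ℝ S) ξ‖) := by
        gcongr ?_ * _ * _
        calc (2 * M) ^ n ≤ (2 * (M + 1)) ^ n := by gcongr; linarith
          _ ≤ (2 * (M + 1)) ^ d := pow_le_pow_right₀ (by linarith) (by omega)
end
end

section
/- There exist constants 0 < c ≤ C, depending only on d and Γ, and ρ₀, depending only on d, Γ, κ and the exponents α_j, such that for all ρ ≥ ρ₀, every ξ ∈ ℝ^d with |ξ| ≥ ρ/2, and every η ∈ Υ(ξ), one has c|ξ| ≤ |η| ≤ C|ξ|. -/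
noncomputable section

open Set Submodule Module MeasureTheory Relation
open scoped RealInnerProductSpace

variable {d : ℕ}

open scoped Nat

/-- Coordinates with respect to a basis of short dual lattice vectors are bounded polynomially in
the length `s` of these vectors: by Cramer's rule, since the determinant is a nonzero integer. -/
theorem abs_repr_le_of_mem_dualLattice (B : Basis (Fin d) ℝ (EuclideanSpace ℝ (Fin d))) {M s : ℝ}
    (hM : ∀ j, ‖B j‖ ≤ M) (β : Basis (Fin d) ℝ (EuclideanSpace ℝ (Fin d)))
    (hβ : ∀ i, β i ∈ Theta0 B s) {v : EuclideanSpace ℝ (Fin d)} (hv : ‖v‖ ≤ s) (i : Fin d) :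
    |β.repr v i| ≤ d ! * (M * s) ^ d := by
  have hpi : (0 : ℝ) < 2 * Real.pi := by positivity
  choose k hk using fun (j i : Fin d) => (hβ i).1 (B j) (Submodule.subset_span (mem_range_self j))
  let K : Matrix (Fin d) (Fin d) ℤ := Matrix.of k
  let A : Matrix (Fin d) (Fin d) ℝ := K.map (Int.castRingHom ℝ)
  let b : Fin d → ℝ := fun j => ⟪v, B j⟫ / (2 * Real.pi)
  have hA (j i : Fin d) : A j i = ⟪β i, B j⟫ / (2 * Real.pi) := by
    rw [hk j i]; field_simp; simp [A, K]
  have entry_le (w : EuclideanSpace ℝ (Fin d)) (hw : ‖w‖ ≤ s) (j : Fin d) :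
      |⟪w, B j⟫ / (2 * Real.pi)| ≤ M * s := by
    have h1 : |⟪w, B j⟫| ≤ M * s := (abs_real_inner_le_norm _ _).trans <| by
      rw [mul_comm]
      exact mul_le_mul (hM j) hw (norm_nonneg _) ((norm_nonneg _).trans (hM j))
    rw [abs_div, abs_of_pos hpi]
    exact (div_le_self (abs_nonneg _) (by linarith [Real.pi_gt_three])).trans h1
  have hdet : K.det ≠ 0 := by
    intro h0
    have hA0 : A.det = 0 := by
      have := (Int.castRingHom ℝ).map_det K
      rw [h0, map_zero] at this
      exact this.symm
    obtain ⟨c, hc, hc0⟩ := Matrix.exists_mulVec_eq_zero_iff.2 hA0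
    have hsum : ∑ i, c i • β i = 0 := by
      refine InnerProductSpace.ext_inner_right_basis B fun j => ?_
      have := congrFun hc0 j
      simp only [Matrix.mulVec, dotProduct, hA, Pi.zero_apply] at this
      rw [sum_inner, inner_zero_left]
      have h2 : (∑ i, ⟪β i, B j⟫ / (2 * Real.pi) * c i) * (2 * Real.pi) = 0 := by
        rw [this, zero_mul]
      rw [← h2, Finset.sum_mul]
      refine Finset.sum_congr rfl fun i _ => ?_
      rw [real_inner_smul_left]; field_simp
    exact hc (funext (Fintype.linearIndependent_iff.1 β.linearIndependent c hsum))
  have hdet1 : 1 ≤ |A.det| := by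
    have : A.det = (K.det : ℝ) := ((Int.castRingHom ℝ).map_det K).symm
    rw [this]
    exact_mod_cast Int.one_le_abs hdet
  have hAc : A.mulVec (β.repr v) = b := by
    ext j
    simp only [Matrix.mulVec, dotProduct, hA, b]
    conv_rhs => rw [← β.sum_repr v, sum_inner, Finset.sum_div]
    refine Finset.sum_congr rfl fun i _ => ?_
    rw [real_inner_smul_left]; ring
  have hcr : A.det * β.repr v i = (A.updateCol i b).det := by
    rw [← Matrix.cramer_apply, Matrix.cramer_eq_adjugate_mulVec, ← hAc, Matrix.mulVec_mulVec,
      Matrix.adjugate_mul, Matrix.smul_mulVec, Matrix.one_mulVec]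
    simp
  have hbound : |(A.updateCol i b).det| ≤ d ! * (M * s) ^ d := by
    have := Matrix.det_le (A := A.updateCol i b) (abv := AbsoluteValue.abs) (x := M * s) (by
      intro j l
      rw [Matrix.updateCol_apply]
      split_ifs
      · exact entry_le v hv j
      · rw [hA]
        exact entry_le _ (hβ l).2 j)
    simpa using this
  rw [← hcr, abs_mul] at hbound
  exact (le_mul_of_one_le_left (abs_nonneg _) hdet1).trans hbound

/-- If `x` is almost orthogonal to a set of short dual lattice vectors, then it is almost
orthogonal to the subspace they span. -/
theorem abs_inner_le_of_mem_span (B : Basis (Fin d) ℝ (EuclideanSpace ℝ (Fin d))) {M s E : ℝ}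
    (hM : ∀ j, ‖B j‖ ≤ M) (hM0 : 0 ≤ M) (hs : 1 ≤ s) (hE : 0 ≤ E)
    (hspan : Submodule.span ℝ (Theta0 B s) = ⊤)
    {S : Set (EuclideanSpace ℝ (Fin d))} (hS : S ⊆ Theta0 B s) {x : EuclideanSpace ℝ (Fin d)}
    (hx : ∀ θ ∈ S, |⟪x, θ⟫| ≤ E * ‖θ‖) {v : EuclideanSpace ℝ (Fin d)}
    (hv : v ∈ Submodule.span ℝ S) :
    |⟪x, v⟫| ≤ d * (d ! * (M * s) ^ d) * (E * s) * ‖v‖ := by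
  obtain ⟨b, hbS, hbspan, hbli⟩ := exists_linearIndependent ℝ S
  obtain ⟨b', hb'T, hbb', hTb', hb'li⟩ := exists_linearIndepOn_id_extension hbli (hbS.trans hS)
  have htop : ⊤ ≤ Submodule.span ℝ (Set.range ((↑) : b' → EuclideanSpace ℝ (Fin d))) := by
    rw [Subtype.range_coe, ← hspan]
    exact Submodule.span_le.2 hTb'
  let β₀ : Basis b' ℝ (EuclideanSpace ℝ (Fin d)) := Basis.mk hb'li htop
  let β : Basis (Fin d) ℝ (EuclideanSpace ℝ (Fin d)) := β₀.reindex (β₀.indexEquiv B)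
  have hmem (i : Fin d) : β i ∈ b' := by
    rw [Basis.reindex_apply, show β₀ _ = _ from Basis.mk_apply hb'li htop _]
    exact Subtype.coe_prop _
  have hrange : b ⊆ Set.range β := by
    intro w hw
    exact ⟨β₀.indexEquiv B ⟨w, hbb' hw⟩, by simp [β, β₀]⟩
  have key (u : EuclideanSpace ℝ (Fin d)) (hu : u ∈ Submodule.span ℝ S) (hu1 : ‖u‖ ≤ s) :
      |⟪x, u⟫| ≤ d * (d ! * (M * s) ^ d) * (E * s) := by
    have hsupp : ∀ i, β i ∉ b → β.repr u i = 0 := by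
      rw [← hbspan, ← Set.image_preimage_eq_of_subset hrange, Basis.mem_span_image] at hu
      intro i hi
      by_contra hne
      exact hi (hu (Finsupp.mem_support_iff.2 hne))
    have hterm : ∀ i ∈ Finset.univ, |⟪x, β.repr u i • β i⟫| ≤ (d ! * (M * s) ^ d) * (E * s) := by
      intro i _
      by_cases hi : β i ∈ b
      · rw [real_inner_smul_right, abs_mul]
        have h1 := abs_repr_le_of_mem_dualLattice B hM β (fun i => hb'T (hmem i)) hu1 i
        have h2 : |⟪x, β i⟫| ≤ E * s :=
          (hx _ (hbS hi)).trans (mul_le_mul_of_nonneg_left (hS (hbS hi)).2 hE)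
        exact mul_le_mul h1 h2 (abs_nonneg _) (by positivity)
      · rw [hsupp i hi, zero_smul, inner_zero_right, abs_zero]
        positivity
    calc |⟪x, u⟫| = |∑ i, ⟪x, β.repr u i • β i⟫| := by
            rw [← inner_sum, β.sum_repr]
      _ ≤ ∑ i, |⟪x, β.repr u i • β i⟫| := Finset.abs_sum_le_sum_abs _ _
      _ ≤ _ := Finset.sum_le_card_nsmul _ _ _ hterm
      _ = _ := by simp [mul_assoc]
  rcases eq_or_ne v 0 with rfl | hv0
  · simp
  · have hpos : 0 < ‖v‖ := norm_pos_iff.2 hv0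
    have := key (‖v‖⁻¹ • v) (Submodule.smul_mem _ _ hv) (by
      rw [norm_smul, norm_inv, norm_norm, inv_mul_cancel₀ hpos.ne']
      exact hs)
    rwa [real_inner_smul_right, abs_mul, abs_inv, abs_norm, inv_mul_le_iff₀ hpos, mul_comm] at this

/-- One step between points almost orthogonal to some `θ ∈ T ∩ V`, along a multiple of `θ`. -/
def stepIn {H : Type*} [NormedAddCommGroup H] [InnerProductSpace ℝ H] (T : Set H) (R : ℝ)
    (V : Submodule ℝ H) (x y : H) : Prop :=
  ∃ θ ∈ T, θ ∈ V ∧ |⟪x, θ⟫| ≤ R * ‖θ‖ ∧ |⟪y, θ⟫| ≤ R * ‖θ‖ ∧ ∃ l : ℝ, x - y = l • θ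

section Chains

variable {H : Type*} [NormedAddCommGroup H] [InnerProductSpace ℝ H] {T : Set H} {R : ℝ}
  {V : Submodule ℝ H} {x y : H}

theorem stepIn.symm (h : stepIn T R V x y) : stepIn T R V y x := by
  obtain ⟨θ, hT, hV, hx, hy, l, hl⟩ := h
  exact ⟨θ, hT, hV, hy, hx, -l, by rw [neg_smul, ← hl, neg_sub]⟩

theorem reflTransGen_stepIn_symm (h : ReflTransGen (stepIn T R V) x y) :
    ReflTransGen (stepIn T R V) y x := by
  induction h with
  | refl => exact .refl
  | tail _ hs ih => exact .head hs.symm ih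

theorem sub_mem_of_reflTransGen_stepIn (h : ReflTransGen (stepIn T R V) x y) : x - y ∈ V := by
  induction h with
  | refl => simp
  | tail _ hs ih =>
    obtain ⟨θ, -, hV, -, -, l, hl⟩ := hs
    rw [← sub_add_sub_cancel, hl]
    exact V.add_mem ih (V.smul_mem _ hV)

/-- If chains from `x` inside the span `W` of the almost orthogonal directions at `x` are short,
then no chain from `x` leaves `W`. -/
theorem reflTransGen_stepIn_span {D : ℝ}
    (hD : ∀ z, ReflTransGen
      (stepIn T R (Submodule.span ℝ {θ | θ ∈ T ∧ θ ∈ V ∧ |⟪x, θ⟫| ≤ (R + D) * ‖θ‖})) x z →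
      ‖x - z‖ ≤ D)
    (h : ReflTransGen (stepIn T R V) x y) :
    ReflTransGen
      (stepIn T R (Submodule.span ℝ {θ | θ ∈ T ∧ θ ∈ V ∧ |⟪x, θ⟫| ≤ (R + D) * ‖θ‖})) x y := by
  induction h with
  | refl => exact .refl
  | @tail z w _ hs ih =>
    obtain ⟨θ, hT, hV, hz, hw, hl⟩ := hs
    refine ih.tail ⟨θ, hT, Submodule.subset_span ⟨hT, hV, ?_⟩, hz, hw, hl⟩
    calc |⟪x, θ⟫| = |⟪z, θ⟫ + ⟪x - z, θ⟫| := by rw [← inner_add_left, add_sub_cancel]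
      _ ≤ |⟪z, θ⟫| + |⟪x - z, θ⟫| := abs_add_le _ _
      _ ≤ R * ‖θ‖ + D * ‖θ‖ := add_le_add hz ((abs_real_inner_le_norm _ _).trans
          (mul_le_mul_of_nonneg_right (hD z ih) (norm_nonneg _)))
      _ = (R + D) * ‖θ‖ := by ring

/-- Chains of steps inside an `n`-dimensional subspace have diameter bounded in terms of `n`. -/
theorem norm_sub_le_of_reflTransGen_stepIn [FiniteDimensional ℝ H] {A : ℝ} (hA : 1 ≤ A)
    (hR : 0 ≤ R)
    (hT : ∀ S ⊆ T, ∀ (x : H) (E : ℝ), 0 ≤ E → (∀ θ ∈ S, |⟪x, θ⟫| ≤ E * ‖θ‖) →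
      ∀ v ∈ Submodule.span ℝ S, |⟪x, v⟫| ≤ A * E * ‖v‖)
    (n : ℕ) (V : Submodule ℝ H) (hV : finrank ℝ V ≤ n) (x y : H)
    (h : ReflTransGen (stepIn T R V) x y) : ‖x - y‖ ≤ (4 * A) ^ n * R - R := by
  induction n generalizing V x y with
  | zero =>
    have hxy := sub_mem_of_reflTransGen_stepIn h
    rw [Submodule.finrank_eq_zero.1 (Nat.le_zero.1 hV), Submodule.mem_bot] at hxy
    simp [hxy]
  | succ n ih =>
    set E := (4 * A) ^ n * R with hE
    have hone : 1 ≤ (4 * A) ^ n := one_le_pow₀ (by linarith)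
    have hRE : R ≤ E := le_mul_of_one_le_left hR hone
    have hE0 : 0 ≤ E := hR.trans hRE
    have hAE : E ≤ A * E := le_mul_of_one_le_left hE0 hA
    have hsucc : (4 * A) ^ (n + 1) * R = 4 * (A * E) := by rw [hE]; ring
    rw [hsucc]
    let S : H → Set H := fun z => {θ | θ ∈ T ∧ θ ∈ V ∧ |⟪z, θ⟫| ≤ (R + (E - R)) * ‖θ‖}
    have small (z w : H) (hz : finrank ℝ (Submodule.span ℝ (S z)) ≤ n)
        (hzw : ReflTransGen (stepIn T R V) z w) : ‖z - w‖ ≤ 4 * (A * E) - R := by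
      have := ih _ hz z w (reflTransGen_stepIn_span (fun u hu => ih _ hz z u hu) hzw)
      linarith
    have full (z : H) (hz : ¬ finrank ℝ (Submodule.span ℝ (S z)) ≤ n) :
        |⟪z, x - y⟫| ≤ A * E * ‖x - y‖ := by
      have hspan : Submodule.span ℝ (S z) = V :=
        Submodule.eq_of_le_of_finrank_le (Submodule.span_le.2 fun θ hθ => hθ.2.1) (by omega)
      refine hT (S z) (fun θ hθ => hθ.1) z E hE0 (fun θ hθ => ?_) _ ?_
      · simpa using hθ.2.2
      · rw [hspan]
        exact sub_mem_of_reflTransGen_stepIn h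
    by_cases hx : finrank ℝ (Submodule.span ℝ (S x)) ≤ n
    · exact small x y hx h
    by_cases hy : finrank ℝ (Submodule.span ℝ (S y)) ≤ n
    · rw [norm_sub_rev]
      exact small y x hy (reflTransGen_stepIn_symm h)
    have hsq : ‖x - y‖ * ‖x - y‖ ≤ 2 * (A * E) * ‖x - y‖ := by
      rw [← real_inner_self_eq_norm_mul_norm, inner_sub_left]
      have h1 := (abs_le.1 (full x hx)).2
      have h2 := (abs_le.1 (full y hy)).1
      linarith
    have hle : ‖x - y‖ ≤ 2 * (A * E) := by
      rcases (norm_nonneg (x - y)).eq_or_lt with h0 | h0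
      · rw [← h0]; linarith
      · exact le_of_mul_le_mul_right hsq h0
    linarith

end Chains

theorem Theta0_mono (B : Basis (Fin d) ℝ (EuclideanSpace ℝ (Fin d))) {r s : ℝ} (h : r ≤ s) :
    Theta0 B r ⊆ Theta0 B s :=
  fun _ hθ => ⟨hθ.1, hθ.2.trans h⟩

theorem abs_inner_le_of_mem_layer {ρ a : ℝ} {θ ξ : EuclideanSpace ℝ (Fin d)}
    (h : ξ ∈ layer ρ a θ) : |⟪ξ, θ⟫| ≤ ρ ^ a * ‖θ‖ := by
  rcases h with rfl | h
  · simp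
  · exact h.le

theorem resStep.stepIn {B : Basis (Fin d) ℝ (EuclideanSpace ℝ (Fin d))} {ρ a r s : ℝ}
    (hrs : r ≤ s) {ξ η : EuclideanSpace ℝ (Fin d)} (h : resStep B ρ a r ξ η) :
    stepIn (Theta0 B s) (ρ ^ a) ⊤ ξ η := by
  obtain ⟨θ, hθ, hξ, hη, l, hl⟩ := h
  exact ⟨θ, Theta0_mono B hrs hθ, Submodule.mem_top, abs_inner_le_of_mem_layer hξ,
    abs_inner_le_of_mem_layer hη, l, hl⟩

/-- The diameter of a resonant congruence class is at most `K ρ ^ (α₁ + κ d (d + 1))`. -/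
theorem exists_norm_sub_le_of_mem_Ups (B : Basis (Fin d) ℝ (EuclideanSpace ℝ (Fin d))) :
    ∃ K : ℝ, ∀ (κ : ℝ) (α : ℕ → ℝ) (ρ r : ℝ), GoodParams B ρ r κ α →
      ∀ ξ, ∀ η ∈ Ups B ρ (α 1) r ξ, ‖ξ - η‖ ≤ K * ρ ^ (α 1 + κ * (d * (d + 1))) := by
  set M : ℝ := ∑ j, ‖B j‖
  have hM0 : 0 ≤ M := Finset.sum_nonneg fun j _ => norm_nonneg _
  have hM (j : Fin d) : ‖B j‖ ≤ M :=
    Finset.single_le_sum (f := fun j => ‖B j‖) (fun j _ => norm_nonneg _) (Finset.mem_univ j)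
  set C : ℝ := d * (d ! * M ^ d) + 1 with hC
  have hC1 : 1 ≤ C := by
    have : 0 ≤ (d : ℝ) * (d ! * M ^ d) := by positivity
    linarith
  refine ⟨(4 * C) ^ d, ?_⟩
  rintro κ α ρ r ⟨hρ, hκ, -, -, -, hr, hspan⟩ ξ η hη
  have hρ0 : 0 < ρ := by linarith
  set s := ρ ^ κ with hs
  have hs1 : 1 ≤ s := Real.one_le_rpow hρ hκ.le
  have hR : 0 ≤ ρ ^ α 1 := (Real.rpow_pos_of_pos hρ0 _).le
  have hspan' : Submodule.span ℝ (Theta0 B s) = ⊤ :=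
    top_le_iff.1 (hspan ▸ Submodule.span_mono (Theta0_mono B hr))
  have hA : 1 ≤ C * s ^ (d + 1) := one_le_mul_of_one_le_of_one_le hC1 (one_le_pow₀ hs1)
  have hmain := norm_sub_le_of_reflTransGen_stepIn (T := Theta0 B s) (R := ρ ^ α 1) hA hR
    (fun S hS x E hE hx v hv =>
      (abs_inner_le_of_mem_span B hM hM0 hs1 hE hspan' hS hx hv).trans <| by
        refine mul_le_mul_of_nonneg_right ?_ (norm_nonneg _)
        have : (d : ℝ) * (d ! * (M * s) ^ d) * (E * s) = (C - 1) * s ^ (d + 1) * E := by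
          rw [hC]; ring
        rw [this]
        gcongr
        linarith)
    d ⊤ (by simp) ξ η (ReflTransGen.mono (fun _ _ h => resStep.stepIn hr h) _ _ hη)
  calc ‖ξ - η‖ ≤ (4 * (C * s ^ (d + 1))) ^ d * ρ ^ α 1 := by linarith
    _ = (4 * C) ^ d * (ρ ^ α 1 * s ^ ((d + 1) * d)) := by
      rw [mul_pow, mul_pow, mul_pow, pow_mul]
      ring
    _ = (4 * C) ^ d * ρ ^ (α 1 + κ * (d * (d + 1))) := by
      rw [Real.rpow_add hρ0, hs, ← Real.rpow_natCast (ρ ^ κ), ← Real.rpow_mul hρ0.le]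
      push_cast
      ring_nf

/-- The exponent bounding the diameter of resonant congruence classes is below one. -/
theorem GoodParams.exponent_lt_one {B : Basis (Fin d) ℝ (EuclideanSpace ℝ (Fin d))} {ρ r κ : ℝ}
    {α : ℕ → ℝ} (hd : 2 ≤ d) (h : GoodParams B ρ r κ α) :
    α 1 + κ * (d * (d + 1)) < 1 := by
  obtain ⟨-, hκ, -, hα, hαd, -⟩ := h
  have hge : ∀ n, 2 ≤ n → n ≤ d → α 2 ≤ α n := by
    intro n hn
    induction n, hn using Nat.le_induction with
    | base => exact fun _ => le_rfl
    | succ n hn ih =>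
      intro hnd
      have h1 := hα n (by omega)
      have h2 := ih (by omega)
      have : 0 ≤ 2 * κ * (d : ℝ) ^ 2 := by positivity
      linarith
  have h1 := hα 1 (by omega)
  have h2 := hge d hd le_rfl
  have hd1 : (2 : ℝ) ≤ d := by exact_mod_cast hd
  have h3 : κ * (d * (d + 1)) ≤ 2 * κ * (d : ℝ) ^ 2 := by
    rw [mul_comm 2 κ, mul_assoc]
    exact mul_le_mul_of_nonneg_left (by nlinarith) hκ.le
  norm_num at h1
  linarith

/-- Lemma 5.7: there are 0 < c ≤ C depending only on d and Γ and,
for each κ and exponents α, a ρ₀ such that for all ρ ≥ ρ₀, all ξ with |ξ| ≥ ρ/2 and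
all η ∈ Υ(ξ), c|ξ| ≤ |η| ≤ C|ξ|. -/
theorem ups_norm_comparable
    (d : ℕ) (hd : 2 ≤ d) (B : Basis (Fin d) ℝ (EuclideanSpace ℝ (Fin d))) :
    ∃ c C : ℝ, 0 < c ∧ c ≤ C ∧ ∀ (κ : ℝ) (α : ℕ → ℝ), ∃ ρ₀ : ℝ,
      ∀ ρ r : ℝ, ρ₀ ≤ ρ → GoodParams B ρ r κ α →
      ∀ ξ : EuclideanSpace ℝ (Fin d), ρ / 2 ≤ ‖ξ‖ →
      ∀ η ∈ Ups B ρ (α 1) r ξ, c * ‖ξ‖ ≤ ‖η‖ ∧ ‖η‖ ≤ C * ‖ξ‖ := by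
  obtain ⟨K, hK⟩ := exists_norm_sub_le_of_mem_Ups B
  refine ⟨1 / 2, 3 / 2, by norm_num, by norm_num, fun κ α => ?_⟩
  by_cases hδ : α 1 + κ * (d * (d + 1)) < 1
  · have hlim := (tendsto_rpow_atTop (sub_pos.2 hδ)).eventually_ge_atTop (4 * K)
    obtain ⟨ρ₀, hρ₀⟩ := Filter.eventually_atTop.1 hlim
    refine ⟨ρ₀, fun ρ r hρ hgood ξ hξ η hη => ?_⟩
    have hpos : 0 < ρ := zero_lt_one.trans_le hgood.1
    have hdist : ‖ξ - η‖ ≤ ‖ξ‖ / 2 := by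
      have h1 := hK κ α ρ r hgood ξ η hη
      have h2 := mul_le_mul_of_nonneg_right (hρ₀ ρ hρ)
        (Real.rpow_pos_of_pos hpos (α 1 + κ * (d * (d + 1)))).le
      rw [← Real.rpow_add hpos, sub_add_cancel, Real.rpow_one] at h2
      linarith
    have h1 := norm_sub_norm_le ξ η
    have h2 := norm_sub_norm_le η ξ
    rw [norm_sub_rev] at h2
    constructor <;> linarith
  · exact ⟨0, fun ρ r _ hgood => absurd (hgood.exponent_lt_one hd) hδ⟩
end
end
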